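/- (Theorem 4.4(i), converse duality.) Let (z̄, ȳ*, μ̄) be feasible for the Mond–Weir robust dual (with respect to the subdifferential data S, T) and suppose in addition z̄ ∈ F. If (f,g) is type I pseudo convex at z̄, then z̄ is a weakly robust efficient solution, i.e., f(z) − f(z̄) ∉ −int K for every z ∈ F. -/

import Mathlib

/-!
Weak duality in scalarized form: dual stationarity exhibits a subgradient `v` of `⟨w, f⟩` at `y` as
`-∑ μᵢ uᵢ`. If `μᵢ > 0`, then complementarity makes the worst-case value of `gᵢ` at `y` nonnegative,
so at a robust feasible `z` no worst-case constraint exceeds its value at `y`; hence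
`uᵢ (z - y) ≤ 0`, a bound that survives weak* closed convex hulls. Thus `v (z - y) ≥ 0`, which by
pseudoconvexity forbids `w (f z) < w (f y)`. But a nonzero `w ∈ K⁺` is an open map sending `K`
into `[0, ∞)`, so it is strictly positive on `int K`, and therefore `f y - f z ∉ int K`.
-/

open Set

theorem le_of_mem_closure_convexHull {E : Type*} [AddCommMonoid E] [Module ℝ E]
    [TopologicalSpace E] {φ : E → ℝ} (hconv : QuasiconvexOn ℝ univ φ)
    (hlsc : LowerSemicontinuous φ) {A : Set E} {c : ℝ} (hA : ∀ a ∈ A, φ a ≤ c) {x : E}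
    (hx : x ∈ closure (convexHull ℝ A)) : φ x ≤ c := by
  have hconvex : Convex ℝ (φ ⁻¹' Iic c) := by
    simpa [preimage, mem_Iic] using hconv c
  exact closure_minimal (convexHull_min hA hconvex) (hlsc.isClosed_preimage c) hx

section WeakDualEval

variable {Z : Type*} [AddCommMonoid Z] [Module ℝ Z] [TopologicalSpace Z]

/-- Evaluation at `x`, as a functional on the dual that is continuous for the weak* topology. -/
noncomputable def weakDualEval (x : Z) : WeakDual ℝ Z →L[ℝ] ℝ :=
  WeakBilin.eval (topDualPairing ℝ Z) x

@[simp]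
theorem weakDualEval_apply (x : Z) (v : WeakDual ℝ Z) : weakDualEval x v = v x :=
  rfl

end WeakDualEval

section DualCone

variable {Y : Type*} [AddCommGroup Y] [Module ℝ Y] [TopologicalSpace Y]

/-- The dual cone `K⁺` of a set `K`, inside the topological dual. -/
def dualCone (K : Set Y) : PointedCone ℝ (Y →L[ℝ] ℝ) :=
  PointedCone.dual (topDualPairing ℝ Y).flip K

theorem pos_of_mem_dualCone_of_mem_interior [ContinuousAdd Y] [ContinuousSMul ℝ Y] {K : Set Y}
    {w : Y →L[ℝ] ℝ} (hw : w ∈ dualCone K) (hw0 : w ≠ 0) {k : Y} (hk : k ∈ interior K) :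
    0 < w k := by
  have hmaps : MapsTo w K (Ici 0) := fun _ hk ↦ hw hk
  have hint := (w.isOpenMap_of_ne_zero hw0).mapsTo_interior hmaps hk
  rwa [interior_Ici] at hint

end DualCone

section RobustOptimization

variable {Z Y 𝒰 ι : Type*} [AddCommGroup Z] [Module ℝ Z] [TopologicalSpace Z]
  [AddCommGroup Y] [Module ℝ Y] [TopologicalSpace Y]

/-- The robust feasible set `F`: the points satisfying every constraint in every scenario. -/
def robustFeasibleSet (g : ι → Z → 𝒰 → ℝ) : Set Z :=
  {z | ∀ i u, g i z u ≤ 0}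

/-- The set `𝒰ᵢ(y)` of worst-case scenarios, for a single constraint `h = gᵢ`. -/
def worstCases (h : Z → 𝒰 → ℝ) (y : Z) : Set 𝒰 :=
  {u | ∀ u', h y u' ≤ h y u}

/-- The weak* closed convex hull of the subdifferentials `Tᵢ(y, u)` over the worst-case scenarios
`u ∈ 𝒰ᵢ(y)`, for a single constraint `h = gᵢ` with subdifferential data `D = Tᵢ`. -/
def robustSubdifferential (h : Z → 𝒰 → ℝ) (D : Z → 𝒰 → Set (WeakDual ℝ Z)) (y : Z) :
    Set (WeakDual ℝ Z) :=
  closure (convexHull ℝ (⋃ u ∈ worstCases h y, D y u))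

/-- Condition (b) of type I and type II pseudoconvexity, for a single constraint `h = gᵢ` with
subdifferential data `D = Tᵢ`. -/
def IsRobustQuasiconvexAt (h : Z → 𝒰 → ℝ) (D : Z → 𝒰 → Set (WeakDual ℝ Z)) (y : Z) : Prop :=
  ∀ z u, h z u ≤ h y u → ∀ v ∈ D y u, v (z - y) ≤ 0

/-- Type I pseudoconvexity of `(f, g)` at `y`, relative to the ordering set `K` and the
subdifferential data `S` of the scalarizations of `f` and `T` of the constraints. -/
structure IsTypeIPseudoconvexAt (K : Set Y) (f : Z → Y) (g : ι → Z → 𝒰 → ℝ)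
    (S : Z → (Y →L[ℝ] ℝ) → Set (WeakDual ℝ Z)) (T : ι → Z → 𝒰 → Set (WeakDual ℝ Z)) (y : Z) :
    Prop where
  objective : ∀ z, ∀ w ∈ dualCone K, w (f z) < w (f y) → ∀ v ∈ S y w, v (z - y) < 0
  constraint : ∀ i, IsRobustQuasiconvexAt (g i) (T i) y

/-- Feasibility of the triple `(y, w, μ)` for the Mond–Weir robust dual. -/
structure IsMondWeirFeasible [Fintype ι] (K : Set Y) (g : ι → Z → 𝒰 → ℝ)
    (S : Z → (Y →L[ℝ] ℝ) → Set (WeakDual ℝ Z)) (T : ι → Z → 𝒰 → Set (WeakDual ℝ Z)) (y : Z)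
    (w : Y →L[ℝ] ℝ) (μ : ι → ℝ) : Prop where
  mem_dualCone : w ∈ dualCone K
  ne_zero : w ≠ 0
  multiplier_nonneg : ∀ i, 0 ≤ μ i
  stationary : ∃ v ∈ S y w, ∃ u : ι → WeakDual ℝ Z,
    (∀ i, u i ∈ robustSubdifferential (g i) (T i) y) ∧ 0 = v + ∑ i, μ i • u i
  complementary : ∀ i, ∀ u ∈ worstCases (g i) y, 0 ≤ μ i * g i y u

theorem IsRobustQuasiconvexAt.apply_sub_nonpos {h : Z → 𝒰 → ℝ}
    {D : Z → 𝒰 → Set (WeakDual ℝ Z)} {y z : Z} (hqc : IsRobustQuasiconvexAt h D y)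
    (hle : ∀ u ∈ worstCases h y, h z u ≤ h y u) {v : WeakDual ℝ Z}
    (hv : v ∈ robustSubdifferential h D y) : v (z - y) ≤ 0 := by
  have hconv := ((weakDualEval (z - y)).toLinearMap.convexOn convex_univ).quasiconvexOn
  have hlsc := (weakDualEval (z - y)).continuous.lowerSemicontinuous
  refine le_of_mem_closure_convexHull hconv hlsc (fun v hv ↦ ?_) hv
  obtain ⟨u, hu, hvu⟩ := mem_iUnion₂.mp hv
  exact hqc z u (hle u hu) v hvu

namespace IsMondWeirFeasible

variable [Fintype ι] {K : Set Y} {f : Z → Y} {g : ι → Z → 𝒰 → ℝ}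
  {S : Z → (Y →L[ℝ] ℝ) → Set (WeakDual ℝ Z)} {T : ι → Z → 𝒰 → Set (WeakDual ℝ Z)} {y z : Z}
  {w : Y →L[ℝ] ℝ} {μ : ι → ℝ}

theorem constraint_le_of_multiplier_pos (hdual : IsMondWeirFeasible K g S T y w μ)
    (hz : z ∈ robustFeasibleSet g) {i : ι} (hi : 0 < μ i) {u : 𝒰} (hu : u ∈ worstCases (g i) y) :
    g i z u ≤ g i y u :=
  (hz i u).trans (nonneg_of_mul_nonneg_right (hdual.complementary i u hu) hi)

theorem multiplier_mul_apply_sub_nonpos (hdual : IsMondWeirFeasible K g S T y w μ)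
    (hz : z ∈ robustFeasibleSet g) {i : ι} (hqc : IsRobustQuasiconvexAt (g i) (T i) y)
    {u : WeakDual ℝ Z} (hu : u ∈ robustSubdifferential (g i) (T i) y) :
    μ i * u (z - y) ≤ 0 := by
  rcases (hdual.multiplier_nonneg i).eq_or_lt with hμ | hμ
  · simp [← hμ]
  · have hle : ∀ s ∈ worstCases (g i) y, g i z s ≤ g i y s := fun _ ↦
      hdual.constraint_le_of_multiplier_pos hz hμ
    exact mul_nonpos_of_nonneg_of_nonpos hμ.le (hqc.apply_sub_nonpos hle hu)

theorem exists_subgradient_apply_sub_nonneg (hdual : IsMondWeirFeasible K g S T y w μ)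
    (hz : z ∈ robustFeasibleSet g) (hqc : ∀ i, IsRobustQuasiconvexAt (g i) (T i) y) :
    ∃ v ∈ S y w, 0 ≤ v (z - y) := by
  obtain ⟨v, hv, u, hu, hstat⟩ := hdual.stationary
  have hsum : ∑ i, μ i * u i (z - y) ≤ 0 :=
    Finset.sum_nonpos fun i _ ↦ hdual.multiplier_mul_apply_sub_nonpos hz (hqc i) (hu i)
  have heval : 0 = v (z - y) + ∑ i, μ i * u i (z - y) := by
    simpa only [map_zero, map_add, map_sum, map_smul, smul_eq_mul, weakDualEval_apply]
      using congrArg (weakDualEval (z - y)) hstat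
  exact ⟨v, hv, by linarith⟩

theorem scalarized_objective_le (hdual : IsMondWeirFeasible K g S T y w μ)
    (hpc : IsTypeIPseudoconvexAt K f g S T y) (hz : z ∈ robustFeasibleSet g) :
    w (f y) ≤ w (f z) := by
  obtain ⟨v, hv, hnonneg⟩ := hdual.exists_subgradient_apply_sub_nonneg hz hpc.constraint
  by_contra! hlt
  exact hnonneg.not_gt (hpc.objective z w hdual.mem_dualCone hlt v hv)

end IsMondWeirFeasible

theorem converse_duality_typeI_general [ContinuousAdd Y] [ContinuousSMul ℝ Y] [Fintype ι]
    {K : Set Y} {f : Z → Y} {g : ι → Z → 𝒰 → ℝ} {S : Z → (Y →L[ℝ] ℝ) → Set (WeakDual ℝ Z)}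
    {T : ι → Z → 𝒰 → Set (WeakDual ℝ Z)} {y z : Z} {w : Y →L[ℝ] ℝ} {μ : ι → ℝ}
    (hdual : IsMondWeirFeasible K g S T y w μ) (hpc : IsTypeIPseudoconvexAt K f g S T y)
    (hz : z ∈ robustFeasibleSet g) : f z - f y ∉ -interior K := by
  intro hmem
  have hpos : 0 < w (-(f z - f y)) :=
    pos_of_mem_dualCone_of_mem_interior hdual.mem_dualCone hdual.ne_zero hmem
  rw [neg_sub, map_sub, sub_pos] at hpos
  exact (hdual.scalarized_objective_le hpc hz).not_gt hpos

end RobustOptimization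

/-!
Theorem 4.4(i): converse duality.  If `(zbar, y', μ)` is feasible for the\nMond-Weir robust dual, `zbar` is robust feasible, and `(f, g)` is type I\npseudo convex at `zbar`, then `zbar` is weakly robust efficient.

`Z`, `Y` are real normed spaces; `Z*` is modeled by `WeakDual ℝ Z` (the dual
with the weak* topology), `Y*` by `Y →L[ℝ] ℝ`.  `K ⊆ Y` is a pointed convex
cone, `g i : Z → 𝒰 → ℝ` are the uncertain constraints, `S` and `T` are the
subdifferential data.
-/

theorem converse_duality_typeI
    {Z Y : Type*} [NormedAddCommGroup Z] [NormedSpace ℝ Z]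
    [NormedAddCommGroup Y] [NormedSpace ℝ Y]
    (K : Set Y) (hKconvex : Convex ℝ K)
    (hKcone : ∀ (c : ℝ), 0 < c → ∀ y ∈ K, c • y ∈ K)
    (hKpointed : K ∩ (-K) = {0})
    {𝒰 : Type*} [Nonempty 𝒰]
    (n : ℕ) (hn : 0 < n)
    (g : Fin n → Z → 𝒰 → ℝ)
    (f : Z → Y)
    -- subdifferential data
    (S : Z → (Y →L[ℝ] ℝ) → Set (WeakDual ℝ Z))
    (T : Fin n → Z → 𝒰 → Set (WeakDual ℝ Z))
    -- zbar is robust feasible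
    (zbar : Z) (hzbarF : ∀ i : Fin n, ∀ u : 𝒰, g i zbar u ≤ 0)
    -- (zbar, y', μ) is feasible for the Mond-Weir robust dual
    (y' : Y →L[ℝ] ℝ) (hy'K : ∀ k ∈ K, 0 ≤ y' k) (hy'0 : y' ≠ 0)
    (μ : Fin n → ℝ) (hμ : ∀ i, 0 ≤ μ i)
    (v' : WeakDual ℝ Z) (hv' : v' ∈ S zbar y')
    (u' : Fin n → WeakDual ℝ Z)
    (hu' : ∀ i, u' i ∈
      closure (convexHull ℝ (⋃ u ∈ {u : 𝒰 | ∀ u', g i zbar u' ≤ g i zbar u}, T i zbar u)))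
    (hfeas : (0 : WeakDual ℝ Z) = v' + ∑ i, μ i • u' i)
    (hsign : ∀ i : Fin n, ∀ u : 𝒰, (∀ u', g i zbar u' ≤ g i zbar u) → 0 ≤ μ i * g i zbar u)
    -- (f, g) is type I pseudo convex at zbar
    (hpcI_a : ∀ z : Z, ∀ w : Y →L[ℝ] ℝ, (∀ k ∈ K, 0 ≤ w k) →
      w (f z) < w (f zbar) → ∀ v ∈ S zbar w, v (z - zbar) < 0)
    (hpcI_b : ∀ z : Z, ∀ u : 𝒰, ∀ i : Fin n, g i z u ≤ g i zbar u →
      ∀ w ∈ T i zbar u, w (z - zbar) ≤ 0)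
 :
    ∀ z : Z, (∀ i : Fin n, ∀ u : 𝒰, g i z u ≤ 0) →
      f z - f zbar ∉ -interior K := by
  intro z hz
  exact converse_duality_typeI_general
    ⟨hy'K, hy'0, hμ, ⟨v', hv', u', hu', hfeas⟩, hsign⟩
    ⟨hpcI_a, fun i z u ↦ hpcI_b z u i⟩ hz
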